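/- arXiv:2511.01161 — 2 statements merged into one kernel-verified Lean document; each statement's English description precedes it below -/
import Mathlib

section
/- Let n ≥ 1 be an integer and δ ∈ (0, n]. There exist positive constants c and C, depending only on n and δ, such that for every f ∈ BLO(ℝⁿ, ℋ^δ_∞) with ‖f‖_{BLO(ℝⁿ,ℋ^δ_∞)} ≠ 0, every cube Q and every t > 0: ℋ^δ_∞({x ∈ Q : f(x) − essinf_{y∈Q} f(y) > t}) ≤ C · ℋ^δ_∞(Q) · exp(−c t / ‖f‖_{BLO(ℝⁿ,ℋ^δ_∞)}). -/
open scoped ENNReal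
open Set MeasureTheory

noncomputable section

/-- An axis-parallel cube in `ℝⁿ`, described by its lower corner and positive side length. -/
structure Cube (n : ℕ) where
  corner : Fin n → ℝ
  side : ℝ
  side_pos : 0 < side

namespace Cube

/-- The half-open cube `∏ᵢ [cornerᵢ, cornerᵢ + side)` as a set of points. -/
def toSet {n : ℕ} (Q : Cube n) : Set (Fin n → ℝ) :=
  {x | ∀ i, Q.corner i ≤ x i ∧ x i < Q.corner i + Q.side}

/-- A cube is dyadic if it has the form `2^k·(z + [0,1)ⁿ)` with `k ∈ ℤ`, `z ∈ ℤⁿ`. -/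
def IsDyadic {n : ℕ} (Q : Cube n) : Prop :=
  ∃ (k : ℤ) (z : Fin n → ℤ), Q.side = (2:ℝ) ^ k ∧ ∀ i, Q.corner i = (z i : ℝ) * (2:ℝ) ^ k

/-- `Q'` is a dyadic subcube of `Q`, i.e. obtained from `Q` by repeated bisection. -/
def IsDyadicSubcube {n : ℕ} (Q' Q : Cube n) : Prop :=
  ∃ (k : ℕ) (z : Fin n → ℕ), (∀ i, z i < 2 ^ k) ∧
    Q'.side = Q.side / 2 ^ k ∧ ∀ i, Q'.corner i = Q.corner i + (z i : ℝ) * (Q.side / 2 ^ k)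

/-- The concentric dilate `t·Q` of a cube. -/
def dilate {n : ℕ} (Q : Cube n) (t : ℝ) (ht : 0 < t) : Cube n :=
  ⟨fun i => Q.corner i + Q.side / 2 - t * Q.side / 2, t * Q.side, mul_pos ht Q.side_pos⟩

end Cube

/-- The Hausdorff content `ℋ^δ_∞`. -/
def hContent (n : ℕ) (δ : ℝ) (E : Set (Fin n → ℝ)) : ℝ≥0∞ :=
  ⨅ (Qs : ℕ → Cube n) (_ : E ⊆ ⋃ i, (Qs i).toSet), ∑' i, ENNReal.ofReal ((Qs i).side ^ δ)

/-- The dyadic Hausdorff content `~ℋ^δ_∞`. -/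
def dContent (n : ℕ) (δ : ℝ) (E : Set (Fin n → ℝ)) : ℝ≥0∞ :=
  ⨅ (Qs : ℕ → Cube n) (_ : (∀ i, (Qs i).IsDyadic) ∧ E ⊆ ⋃ i, (Qs i).toSet),
    ∑' i, ENNReal.ofReal ((Qs i).side ^ δ)

/-- The Choquet integral `∫_E f dℋ^δ_∞`. -/
def integH (n : ℕ) (δ : ℝ) (f : (Fin n → ℝ) → ℝ) (E : Set (Fin n → ℝ)) : ℝ≥0∞ :=
  ∫⁻ t in Ioi (0:ℝ), hContent n δ {x | x ∈ E ∧ t < f x}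

/-- The Choquet integral `∫_E f d~ℋ^δ_∞` w.r.t. the dyadic Hausdorff content. -/
def integD (n : ℕ) (δ : ℝ) (f : (Fin n → ℝ) → ℝ) (E : Set (Fin n → ℝ)) : ℝ≥0∞ :=
  ∫⁻ t in Ioi (0:ℝ), dContent n δ {x | x ∈ E ∧ t < f x}

/-- A property holds `ℋ^δ_∞`-a.e. -/
def AEContent (n : ℕ) (δ : ℝ) (P : (Fin n → ℝ) → Prop) : Prop :=
  hContent n δ {x | ¬ P x} = 0

/-- `ℋ^δ_∞`-quasicontinuity. -/
def QuasiCont (n : ℕ) (δ : ℝ) (f : (Fin n → ℝ) → ℝ) : Prop :=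
  ∀ ε : ℝ, 0 < ε → ∃ O : Set (Fin n → ℝ),
    IsOpen O ∧ hContent n δ O < ENNReal.ofReal ε ∧ ContinuousOn f Oᶜ

/-- `L¹_loc(ℝⁿ, ℋ^δ_∞)`. -/
def MemL1loc (n : ℕ) (δ : ℝ) (f : (Fin n → ℝ) → ℝ) : Prop :=
  QuasiCont n δ f ∧ ∀ K : Set (Fin n → ℝ), IsCompact K → integH n δ (fun x => |f x|) K < ⊤

/-- `L^∞(ℝⁿ, ℋ^δ_∞)`. -/
def MemLinf (n : ℕ) (δ : ℝ) (f : (Fin n → ℝ) → ℝ) : Prop :=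
  QuasiCont n δ f ∧ ∃ M : ℝ, AEContent n δ (fun x => |f x| ≤ M)

/-- The `BMO(ℝⁿ, ℋ^δ_∞)` seminorm. -/
def bmoNorm (n : ℕ) (δ : ℝ) (f : (Fin n → ℝ) → ℝ) : ℝ≥0∞ :=
  ⨆ Q : Cube n, ⨅ c : ℝ,
    integH n δ (fun x => |f x - c|) Q.toSet / hContent n δ Q.toSet

/-- Membership in `BMO(ℝⁿ, ℋ^δ_∞)`. -/
def MemBMO (n : ℕ) (δ : ℝ) (f : (Fin n → ℝ) → ℝ) : Prop :=
  MemL1loc n δ f ∧ bmoNorm n δ f < ⊤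

/-- `essinf_{x ∈ Q} f := inf {t ∈ (0,∞) : ℋ^δ_∞({x ∈ Q : f x < t}) > 0}`. -/
def essInfQ (n : ℕ) (δ : ℝ) (f : (Fin n → ℝ) → ℝ) (Q : Cube n) : ℝ :=
  sInf {t : ℝ | 0 < t ∧ 0 < hContent n δ {x | x ∈ Q.toSet ∧ f x < t}}

/-- The `BLO(ℝⁿ, ℋ^δ_∞)` seminorm. -/
def bloNorm (n : ℕ) (δ : ℝ) (f : (Fin n → ℝ) → ℝ) : ℝ≥0∞ :=
  ⨆ Q : Cube n,
    integH n δ (fun x => |f x - essInfQ n δ f Q|) Q.toSet / hContent n δ Q.toSet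

/-- Membership in `BLO(ℝⁿ, ℋ^δ_∞)`. -/
def MemBLO (n : ℕ) (δ : ℝ) (f : (Fin n → ℝ) → ℝ) : Prop :=
  MemL1loc n δ f ∧ bloNorm n δ f < ⊤

/-- A weight: locally Choquet-integrable, quasicontinuous, positive `ℋ^δ_∞`-a.e. -/
def IsWeight (n : ℕ) (δ : ℝ) (w : (Fin n → ℝ) → ℝ) : Prop :=
  MemL1loc n δ w ∧ AEContent n δ (fun x => 0 < w x)

/-- The capacitary Muckenhoupt `A_{p,δ}` constant, for `p > 1`. -/
def apConst (n : ℕ) (δ p : ℝ) (w : (Fin n → ℝ) → ℝ) : ℝ≥0∞ :=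
  ⨆ Q : Cube n,
    (integH n δ w Q.toSet / hContent n δ Q.toSet) *
      (integH n δ (fun x => w x ^ (-(1 / (p - 1)))) Q.toSet / hContent n δ Q.toSet) ^ (p - 1)

/-- Membership in `A_{p,δ}`, `p > 1`. -/
def MemAp (n : ℕ) (δ p : ℝ) (w : (Fin n → ℝ) → ℝ) : Prop :=
  IsWeight n δ w ∧ apConst n δ p w < ⊤

/-- The Hardy–Littlewood maximal operator w.r.t. `ℋ^δ_∞`. -/
def maxOp (n : ℕ) (δ : ℝ) (g : (Fin n → ℝ) → ℝ) (x : Fin n → ℝ) : ℝ≥0∞ :=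
  ⨆ (Q : Cube n) (_ : x ∈ Q.toSet),
    integH n δ (fun y => |g y|) Q.toSet / hContent n δ Q.toSet

/-- The capacitary `A_{1,δ}` constant. -/
def a1Const (n : ℕ) (δ : ℝ) (w : (Fin n → ℝ) → ℝ) : ℝ≥0∞ :=
  sInf {c : ℝ≥0∞ | 0 < c ∧
    AEContent n δ (fun x => maxOp n δ w x ≤ c * ENNReal.ofReal (w x))}

/-- Membership in `A_{1,δ}`. -/
def MemA1 (n : ℕ) (δ : ℝ) (w : (Fin n → ℝ) → ℝ) : Prop :=
  IsWeight n δ w ∧ a1Const n δ w < ⊤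

/-- The `A_{p,δ}` constant for `p ∈ [1,∞)` (it is the `A_{1,δ}` constant when `p = 1`). -/
def apConstGen (n : ℕ) (δ p : ℝ) (w : (Fin n → ℝ) → ℝ) : ℝ≥0∞ :=
  if p = 1 then a1Const n δ w else apConst n δ p w

/-- Membership in `A_{p,δ}` for `p ∈ [1,∞)` (meaning `A_{1,δ}` when `p = 1`). -/
def MemApGen (n : ℕ) (δ p : ℝ) (w : (Fin n → ℝ) → ℝ) : Prop :=
  IsWeight n δ w ∧ apConstGen n δ p w < ⊤

/-- The weighted `BMO^q_w(ℝⁿ, ℋ^δ_∞)` seminorm. -/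
def bmoWNorm (n : ℕ) (δ q : ℝ) (w f : (Fin n → ℝ) → ℝ) : ℝ≥0∞ :=
  ⨆ Q : Cube n, ⨅ c : ℝ,
    (integH n δ (fun x => |f x - c| ^ q * w x) Q.toSet / integH n δ w Q.toSet) ^ (1 / q)

/-- Membership in `BMO^q_w(ℝⁿ, ℋ^δ_∞)`. -/
def MemBMOw (n : ℕ) (δ q : ℝ) (w f : (Fin n → ℝ) → ℝ) : Prop :=
  QuasiCont n δ f ∧
    (∀ K : Set (Fin n → ℝ), IsCompact K → integH n δ (fun x => |f x| ^ q * w x) K < ⊤) ∧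
    bmoWNorm n δ q w f < ⊤

/-- The integral average `f_{Q,δ}` with respect to the dyadic Hausdorff content. -/
def avgQ (n : ℕ) (δ : ℝ) (f : (Fin n → ℝ) → ℝ) (Q : Cube n) : ℝ :=
  ((integD n δ f (Q.toSet ∩ {x | 0 ≤ f x})).toReal -
      (integD n δ (fun x => -f x) (Q.toSet ∩ {x | f x < 0})).toReal) /
    ((dContent n δ (Q.toSet ∩ {x | 0 ≤ f x})).toReal +
      (dContent n δ (Q.toSet ∩ {x | f x < 0})).toReal)


lemma hC_mono (n : ℕ) (δ : ℝ) {A B : Set (Fin n → ℝ)} (h : A ⊆ B) :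
    hContent n δ A ≤ hContent n δ B := by
  unfold hContent
  exact le_iInf₂ fun Qs hQ => iInf₂_le Qs (h.trans hQ)

lemma hC_le_cube (n : ℕ) (δ : ℝ) (hδ : 0 < δ) (E : Set (Fin n → ℝ)) (Q : Cube n)
    (h : E ⊆ Q.toSet) : hContent n δ E ≤ ENNReal.ofReal (Q.side ^ δ) := by
  refine ENNReal.le_of_forall_pos_le_add fun ε hε _ => ?_
  obtain ⟨ε', hpos, hsum⟩ := ENNReal.exists_pos_sum_of_countable
    (ε := (ε : ℝ≥0∞)) (by simpa using hε.ne') ℕ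
  let Qs : ℕ → Cube n := fun i => Nat.casesOn i Q
    (fun j => ⟨0, ((ε' j : ℝ)) ^ (1 / δ), Real.rpow_pos_of_pos (by exact_mod_cast hpos j) _⟩)
  have h1 : E ⊆ ⋃ i, (Qs i).toSet := fun x hx => mem_iUnion.2 ⟨0, h hx⟩
  refine (iInf₂_le Qs h1).trans ?_
  rw [tsum_eq_zero_add' ENNReal.summable]
  refine add_le_add le_rfl (le_trans (le_of_eq ?_) hsum.le)
  refine tsum_congr fun j => ?_
  change ENNReal.ofReal ((((ε' j : ℝ)) ^ (1 / δ)) ^ δ) = _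
  rw [← Real.rpow_mul (by positivity), one_div_mul_cancel hδ.ne', Real.rpow_one]
  simp

lemma hC_empty (n : ℕ) (δ : ℝ) (hδ : 0 < δ) : hContent n δ ∅ = 0 := by
  refine le_antisymm (ENNReal.le_of_forall_pos_le_add fun ε hε _ => ?_) (zero_le)
  refine (hC_le_cube n δ hδ ∅ ⟨0, (ε : ℝ) ^ (1 / δ),
    Real.rpow_pos_of_pos (by exact_mod_cast hε) _⟩ (empty_subset _)).trans ?_
  change ENNReal.ofReal ((((ε : ℝ)) ^ (1 / δ)) ^ δ) ≤ _
  rw [← Real.rpow_mul (by positivity), one_div_mul_cancel hδ.ne', Real.rpow_one]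
  simp

lemma hC_iUnion_nat (n : ℕ) (δ : ℝ) (E : ℕ → Set (Fin n → ℝ)) :
    hContent n δ (⋃ i, E i) ≤ ∑' i, hContent n δ (E i) := by
  refine ENNReal.le_of_forall_pos_le_add fun ε hε hfin => ?_
  obtain ⟨ε', hpos, hsum⟩ := ENNReal.exists_pos_sum_of_countable
    (ε := (ε : ℝ≥0∞)) (by simpa using hε.ne') ℕ
  have key : ∀ i, ∃ Qs : ℕ → Cube n, E i ⊆ ⋃ j, (Qs j).toSet ∧
      ∑' j, ENNReal.ofReal ((Qs j).side ^ δ) ≤ hContent n δ (E i) + ε' i := by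
    intro i
    have hlt : hContent n δ (E i) < hContent n δ (E i) + ε' i :=
      ENNReal.lt_add_right (ne_top_of_le_ne_top hfin.ne (ENNReal.le_tsum i))
        (by simpa using (hpos i).ne')
    conv_lhs at hlt => unfold hContent
    obtain ⟨Qs, hQ⟩ := iInf_lt_iff.1 hlt
    obtain ⟨h1, h2⟩ := iInf_lt_iff.1 hQ
    exact ⟨Qs, h1, h2.le⟩
  choose Qs hcov hQs using key
  have h1 : (⋃ i, E i) ⊆ ⋃ m, (Qs (Nat.unpair m).1 (Nat.unpair m).2).toSet := by
    intro x hx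
    obtain ⟨i, hi⟩ := mem_iUnion.1 hx
    obtain ⟨j, hj⟩ := mem_iUnion.1 (hcov i hi)
    exact mem_iUnion.2 ⟨Nat.pair i j, by simpa using hj⟩
  refine (iInf₂_le (fun m => Qs (Nat.unpair m).1 (Nat.unpair m).2) h1).trans ?_
  have e : ∑' m : ℕ, ENNReal.ofReal ((Qs (Nat.unpair m).1 (Nat.unpair m).2).side ^ δ)
      = ∑' p : ℕ × ℕ, ENNReal.ofReal ((Qs p.1 p.2).side ^ δ) :=
    Nat.pairEquiv.symm.tsum_eq (fun p : ℕ × ℕ => ENNReal.ofReal ((Qs p.1 p.2).side ^ δ))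
  rw [e, ENNReal.tsum_prod (f := fun i j => ENNReal.ofReal ((Qs i j).side ^ δ))]
  calc _ ≤ ∑' i, (hContent n δ (E i) + ε' i) := ENNReal.tsum_le_tsum hQs
    _ = _ := ENNReal.tsum_add
    _ ≤ _ := add_le_add le_rfl hsum.le

/-- Hausdorff content as an outer measure. -/
def hOM (n : ℕ) (δ : ℝ) (hδ : 0 < δ) : OuterMeasure (Fin n → ℝ) where
  measureOf := hContent n δ
  empty := hC_empty n δ hδ
  mono := hC_mono n δ
  iUnion_nat E _ := hC_iUnion_nat n δ E

lemma hC_iUnion (n : ℕ) (δ : ℝ) (hδ : 0 < δ) {ι : Type*} [Countable ι]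
    (E : ι → Set (Fin n → ℝ)) :
    hContent n δ (⋃ i, E i) ≤ ∑' i, hContent n δ (E i) :=
  measure_iUnion_le (μ := hOM n δ hδ) E

lemma hC_union (n : ℕ) (δ : ℝ) (hδ : 0 < δ) (A B : Set (Fin n → ℝ)) :
    hContent n δ (A ∪ B) ≤ hContent n δ A + hContent n δ B :=
  measure_union_le (μ := hOM n δ hδ) A B

lemma vol_cube {n : ℕ} (Q : Cube n) : volume Q.toSet = ENNReal.ofReal (Q.side ^ (n : ℝ)) := by
  have : Q.toSet = Set.pi univ (fun i => Ico (Q.corner i) (Q.corner i + Q.side)) := by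
    ext x; simp [Cube.toSet]
  rw [this, Real.volume_pi_Ico]
  simp [ENNReal.ofReal_pow Q.side_pos.le]

lemma hC_cube (n : ℕ) (δ : ℝ) (hδ : 0 < δ) (hδn : δ ≤ n) (Q : Cube n) :
    hContent n δ Q.toSet = ENNReal.ofReal (Q.side ^ δ) := by
  refine le_antisymm (hC_le_cube n δ hδ _ Q subset_rfl) ?_
  refine le_iInf₂ fun Qs hcov => ?_
  by_contra! hlt
  have hs := Q.side_pos
  have hside : ∀ i, (Qs i).side ≤ Q.side := by
    intro i
    have := (ENNReal.le_tsum (f := fun i => ENNReal.ofReal ((Qs i).side ^ δ)) i).trans hlt.le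
    rw [ENNReal.ofReal_le_ofReal_iff (by positivity)] at this
    exact (Real.rpow_le_rpow_iff (Qs i).side_pos.le hs.le hδ).1 this
  have hv : ENNReal.ofReal (Q.side ^ (n : ℝ)) ≤
      ∑' i, ENNReal.ofReal ((Qs i).side ^ (n : ℝ)) := by
    rw [← vol_cube]
    simp_rw [← vol_cube]
    exact (measure_mono hcov).trans (measure_iUnion_le _)
  have h2 : ∀ i, ENNReal.ofReal ((Qs i).side ^ (n : ℝ)) ≤
      ENNReal.ofReal (Q.side ^ (n - δ)) * ENNReal.ofReal ((Qs i).side ^ δ) := by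
    intro i
    have hi := (Qs i).side_pos
    rw [← ENNReal.ofReal_mul (by positivity)]
    apply ENNReal.ofReal_le_ofReal
    calc (Qs i).side ^ (n : ℝ) = (Qs i).side ^ (n - δ) * (Qs i).side ^ δ := by
          rw [← Real.rpow_add hi]; ring_nf
      _ ≤ _ := by
          gcongr
          exact hside i
  have h3 := hv.trans (ENNReal.tsum_le_tsum h2)
  rw [ENNReal.tsum_mul_left] at h3
  have h4 : ENNReal.ofReal (Q.side ^ (n : ℝ)) =
      ENNReal.ofReal (Q.side ^ (n - δ)) * ENNReal.ofReal (Q.side ^ δ) := by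
    rw [← ENNReal.ofReal_mul (by positivity), ← Real.rpow_add hs]; ring_nf
  rw [h4] at h3
  have h5 := ENNReal.mul_lt_mul_right (a := ENNReal.ofReal (Q.side ^ (n - δ)))
    (by simpa using Real.rpow_pos_of_pos hs _) ENNReal.ofReal_ne_top hlt
  exact absurd h3 (not_le.2 h5)

/-- Dyadic code of a point relative to the cube `Q` at level `k`. -/
def code {n : ℕ} (Q : Cube n) (k : ℕ) (x : Fin n → ℝ) : Fin n → ℤ :=
  fun i => ⌊2 ^ k * ((x i - Q.corner i) / Q.side)⌋

/-- Dyadic cell. -/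
def cell {n : ℕ} (Q : Cube n) (k : ℕ) (z : Fin n → ℤ) : Cube n :=
  ⟨fun i => Q.corner i + z i * (Q.side / 2 ^ k), Q.side / 2 ^ k, by
    have := Q.side_pos; positivity⟩

lemma mem_cell {n : ℕ} (Q : Cube n) (k : ℕ) (z : Fin n → ℤ) (x : Fin n → ℝ) :
    x ∈ (cell Q k z).toSet ↔ code Q k x = z := by
  have hs := Q.side_pos
  have h2 : (0:ℝ) < 2 ^ k := by positivity
  have : ∀ i, (2:ℝ) ^ k * ((x i - Q.corner i) / Q.side) = (x i - Q.corner i) / (Q.side / 2 ^ k) := by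
    intro i; field_simp
  simp only [Cube.toSet, cell, Set.mem_ofPred_eq, code, funext_iff, Int.floor_eq_iff, this]
  have hp : 0 < Q.side / 2 ^ k := by positivity
  refine forall_congr' fun i => and_congr ?_ ?_
  · rw [le_div_iff₀ hp]; constructor <;> intro h <;> linarith
  · rw [div_lt_iff₀ hp]; constructor <;> intro h <;> linarith

lemma code_nest {n : ℕ} (Q : Cube n) {j k : ℕ} (hjk : j ≤ k) {x y : Fin n → ℝ}
    (h : code Q k x = code Q k y) : code Q j x = code Q j y := by
  have key : ∀ a : ℝ, ⌊2 ^ j * a⌋ = ⌊2 ^ k * a⌋ / ((2 ^ (k - j) : ℕ) : ℤ) := by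
    intro a
    rw [← Int.floor_div_natCast]
    congr 1
    obtain ⟨m, rfl⟩ := Nat.exists_eq_add_of_le hjk
    simp [pow_add]; field_simp
  funext i
  have := congrFun h i
  simp only [code] at this ⊢
  rw [key, this, ← key]

lemma cell_zero {n : ℕ} (Q : Cube n) : (cell Q 0 0).toSet = Q.toSet := by
  simp [cell, Cube.toSet]

lemma mem_cube_iff_code {n : ℕ} (Q : Cube n) (x : Fin n → ℝ) :
    x ∈ Q.toSet ↔ code Q 0 x = 0 := by
  rw [← cell_zero, mem_cell]

/-- Size of a level `k` cell. -/
def csz {n : ℕ} (Q : Cube n) (δ : ℝ) (k : ℕ) : ℝ≥0∞ := ENNReal.ofReal ((Q.side / 2 ^ k) ^ δ)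

open Classical in
lemma selection (n : ℕ) (δ : ℝ) (hδ : 0 < δ) (hδn : δ ≤ n) (Q : Cube n)
    (E : Set (Fin n → ℝ)) (hE : E ⊆ Q.toSet) {ι : Type} [Countable ι]
    (k : ι → ℕ) (p : ι → Fin n → ℝ)
    (hcov : ∀ x ∈ E, ∃ i, code Q (k i) x = code Q (k i) (p i))
    (hsum : ∑' i, csz Q δ (k i) < ENNReal.ofReal (Q.side ^ δ)) :
    ∃ (κ : Type) (_ : Countable κ) (R P : κ → Cube n),
      E ⊆ ⋃ c, (R c).toSet ∧
      ∑' c, ENNReal.ofReal ((R c).side ^ δ) ≤ ∑' i, csz Q δ (k i) ∧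
      ∀ c, (P c).side = 2 * (R c).side ∧ (R c).toSet ⊆ (P c).toSet ∧ (P c).toSet ⊆ Q.toSet ∧
        hContent n δ (E ∩ (P c).toSet) < ENNReal.ofReal ((P c).side ^ δ) := by
  set m : ℕ → (Fin n → ℤ) → ℝ≥0∞ := fun j w =>
    ∑' i, if j ≤ k i ∧ code Q j (p i) = w then csz Q δ (k i) else 0 with hm
  let good : ℕ → (Fin n → ℤ) → Prop := fun j w => csz Q δ j ≤ m j w
  let S : Set (ℕ × (Fin n → ℤ)) := {c | good c.1 c.2 ∧
    (∀ x, code Q c.1 x = c.2 → ∀ j < c.1, ¬ good j (code Q j x)) ∧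
    ∃ x ∈ E, code Q c.1 x = c.2}
  have hgood : ∀ x i, code Q (k i) x = code Q (k i) (p i) → good (k i) (code Q (k i) x) := by
    intro x i h
    change csz Q δ (k i) ≤ ∑' i', _
    refine le_trans ?_ (ENNReal.le_tsum i)
    simp [h]
  have hbad0 : ∀ w, ¬ good 0 w := by
    intro w h
    have h1 : m 0 w ≤ ∑' i, csz Q δ (k i) := by
      refine ENNReal.tsum_le_tsum fun i => ?_
      split_ifs <;> simp
    have h2 := (h.trans h1).trans_lt hsum
    simp [csz] at h2
  have hP : ∀ c : S, ∃ P : Cube n, P.side = 2 * (cell Q c.1.1 c.1.2).side ∧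
      (cell Q c.1.1 c.1.2).toSet ⊆ P.toSet ∧ P.toSet ⊆ Q.toSet ∧
        hContent n δ (E ∩ P.toSet) < ENNReal.ofReal (P.side ^ δ) := by
    rintro ⟨⟨j, w⟩, hg, hmin, x, hxE, hxw⟩
    simp only at hg hmin hxw ⊢
    obtain _ | j := j
    · exact absurd hg (hbad0 w)
    refine ⟨cell Q j (code Q j x), ?_, ?_, ?_, ?_⟩
    · simp only [cell]; rw [pow_succ]; field_simp
    · intro y hy
      rw [mem_cell] at hy ⊢
      exact code_nest Q (Nat.le_succ j) (hy.trans hxw.symm)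
    · intro y hy
      rw [mem_cell] at hy
      have := (mem_cube_iff_code Q x).1 (hE hxE)
      rw [mem_cube_iff_code, ← this]
      exact code_nest Q (Nat.zero_le j) hy
    · have hnb : m j (code Q j x) < csz Q δ j := not_le.1 (hmin x hxw j (Nat.lt_succ_self j))
      refine lt_of_le_of_lt ?_ hnb
      have hsub : E ∩ (cell Q j (code Q j x)).toSet ⊆
          ⋃ i, (if j ≤ k i ∧ code Q j (p i) = code Q j x then
            (cell Q (k i) (code Q (k i) (p i))).toSet else ∅) := by
        rintro y ⟨hyE, hy⟩
        rw [mem_cell] at hy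
        obtain ⟨i, hi⟩ := hcov y hyE
        refine mem_iUnion.2 ⟨i, ?_⟩
        have hjk : j ≤ k i := by
          by_contra! hlt
          have h1 := hgood y i hi
          rw [code_nest Q hlt.le hy] at h1
          exact hmin x hxw (k i) (hlt.trans (Nat.lt_succ_self j)) h1
        rw [if_pos ⟨hjk, (code_nest Q hjk hi.symm).trans hy⟩, mem_cell]
        exact hi
      refine (hC_mono n δ hsub).trans ((hC_iUnion n δ hδ _).trans (ENNReal.tsum_le_tsum fun i => ?_))
      split_ifs
      · exact hC_le_cube n δ hδ _ _ subset_rfl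
      · rw [hC_empty n δ hδ]
  choose P hP using hP
  refine ⟨S, inferInstance, fun c => cell Q c.1.1 c.1.2, P, ?_, ?_, hP⟩
  · intro x hx
    have hex : ∃ j, good j (code Q j x) := by
      obtain ⟨i, hi⟩ := hcov x hx
      exact ⟨k i, hgood x i hi⟩
    refine mem_iUnion.2 ⟨⟨(Nat.find hex, code Q (Nat.find hex) x), Nat.find_spec hex, ?_,
      x, hx, rfl⟩, ?_⟩
    · intro y hy j hj
      simp only at hy hj
      rw [code_nest Q hj.le hy]
      exact Nat.find_min hex hj
    · rw [mem_cell]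
  · calc ∑' c : S, ENNReal.ofReal ((cell Q c.1.1 c.1.2).side ^ δ)
        ≤ ∑' c : S, m c.1.1 c.1.2 := ENNReal.tsum_le_tsum fun c => c.2.1
      _ = ∑' i, ∑' c : S, (if c.1.1 ≤ k i ∧ code Q c.1.1 (p i) = c.1.2 then csz Q δ (k i) else 0) :=
          ENNReal.tsum_comm
      _ ≤ _ := ENNReal.tsum_le_tsum fun i => ?_
    by_cases hc : ∃ c : S, c.1.1 ≤ k i ∧ code Q c.1.1 (p i) = c.1.2
    · obtain ⟨c, hc⟩ := hc
      rw [tsum_eq_single c, if_pos hc]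
      intro c' hne
      rw [if_neg]
      rintro ⟨h1, h2⟩
      apply hne
      have hj : c'.1.1 = c.1.1 := by
        rcases lt_trichotomy c'.1.1 c.1.1 with h | h | h
        · exfalso
          refine c.2.2.1 (p i) hc.2 _ h ?_
          rw [h2]; exact c'.2.1
        · exact h
        · exfalso
          refine c'.2.2.1 (p i) h2 _ h ?_
          rw [hc.2]; exact c.2.1
      refine Subtype.ext (Prod.ext hj ?_)
      rw [← h2, ← hc.2, hj]
    · push Not at hc
      rw [ENNReal.tsum_eq_zero.2]
      · simp
      · intro c
        rw [if_neg]
        rintro ⟨h1, h2⟩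
        exact hc c h1 h2

lemma dyadic_cover {n : ℕ} (Q W : Cube n) (h : W.side ≤ Q.side) :
    ∃ (k : ℕ) (p : (Fin n → Bool) → Fin n → ℝ), Q.side / 2 ^ k ≤ 2 * W.side ∧
      ∀ x ∈ W.toSet, ∃ b, code Q k x = code Q k (p b) := by
  have hs := Q.side_pos
  have hr := W.side_pos
  obtain ⟨k, hk1, hk2⟩ := exists_nat_pow_near (x := Q.side / W.side) (y := (2:ℝ))
    ((one_le_div hr).2 h) (by norm_num)
  have h2 : (0:ℝ) < 2 ^ k := by positivity
  rw [le_div_iff₀ hr] at hk1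
  rw [div_lt_iff₀ hr, pow_succ] at hk2
  refine ⟨k, fun b i => W.corner i + (if b i then Q.side / 2 ^ k else 0), ?_, ?_⟩
  · rw [div_le_iff₀ h2]; linarith
  intro x hx
  refine ⟨fun i => decide (code Q k x i ≠ code Q k W.corner i), ?_⟩
  funext i
  obtain ⟨hx1, hx2⟩ := hx i
  by_cases he : code Q k x i = code Q k W.corner i
  · rw [he]
    simp only [code] at he
    simp [code, he]
  · have e1 : code Q k (fun i => W.corner i +
        (if decide (code Q k x i ≠ code Q k W.corner i) then Q.side / 2 ^ k else 0)) i
        = code Q k W.corner i + 1 := by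
      simp only [code] at he
      simp only [code, he, ne_eq, not_false_eq_true, decide_true, if_true]
      rw [← Int.floor_add_one]
      congr 1
      field_simp
      ring
    rw [e1]
    have hle : (2:ℝ) ^ k * ((W.corner i - Q.corner i) / Q.side) ≤
        2 ^ k * ((x i - Q.corner i) / Q.side) := by gcongr
    have hlt : 2 ^ k * ((x i - Q.corner i) / Q.side) <
        (2:ℝ) ^ k * ((W.corner i - Q.corner i) / Q.side) + 1 := by
      have : (2:ℝ) ^ k * ((x i - Q.corner i) / Q.side) -
        (2:ℝ) ^ k * ((W.corner i - Q.corner i) / Q.side) =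
          2 ^ k * (x i - W.corner i) / Q.side := by field_simp; ring
      have h3 : 2 ^ k * (x i - W.corner i) / Q.side < 1 := by
        rw [div_lt_one hs]
        refine lt_of_lt_of_le ?_ hk1
        gcongr; linarith
      linarith
    have f1 := Int.floor_le_floor hle
    have f2 := Int.floor_le_floor hlt.le
    rw [Int.floor_add_one] at f2
    simp only [code] at he ⊢
    omega

lemma step_cover (n : ℕ) (δ : ℝ) (hδ : 0 < δ) (hδn : δ ≤ n) (Q : Cube n)
    (E : Set (Fin n → ℝ)) (hE : E ⊆ Q.toSet)
    (hsm : hContent n δ E < ENNReal.ofReal (Q.side ^ δ / (2 * (2 ^ n * 2 ^ δ)))) :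
    ∃ (κ : Type) (_ : Countable κ) (R P : κ → Cube n),
      E ⊆ ⋃ c, (R c).toSet ∧
      ∑' c, ENNReal.ofReal ((R c).side ^ δ) ≤ ENNReal.ofReal (Q.side ^ δ / 2) ∧
      ∀ c, (P c).side = 2 * (R c).side ∧ (R c).toSet ⊆ (P c).toSet ∧ (P c).toSet ⊆ Q.toSet ∧
        hContent n δ (E ∩ (P c).toSet) < ENNReal.ofReal ((P c).side ^ δ) := by
  have hs := Q.side_pos
  have hsd : 0 < Q.side ^ δ := by positivity
  have hM : 1 ≤ (2:ℝ) ^ n * 2 ^ δ := by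
    have := one_le_pow₀ (M₀ := ℝ) (a := 2) (by norm_num) (n := n)
    have := Real.one_le_rpow (x := 2) (by norm_num) hδ.le
    nlinarith
  unfold hContent at hsm
  obtain ⟨Qs, hQ⟩ := iInf_lt_iff.1 hsm
  obtain ⟨h1, h2⟩ := iInf_lt_iff.1 hQ
  have hside : ∀ i, (Qs i).side ≤ Q.side := by
    intro i
    have := (ENNReal.le_tsum (f := fun i => ENNReal.ofReal ((Qs i).side ^ δ)) i).trans h2.le
    rw [ENNReal.ofReal_le_ofReal_iff (by positivity)] at this
    refine (Real.rpow_le_rpow_iff (Qs i).side_pos.le hs.le hδ).1 (this.trans ?_)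
    exact div_le_self hsd.le (by linarith)
  choose k p hk hp using fun i => dyadic_cover Q (Qs i) (hside i)
  have hS : ∑' ib : ℕ × (Fin n → Bool), csz Q δ (k ib.1) ≤ ENNReal.ofReal (Q.side ^ δ / 2) := by
    rw [ENNReal.tsum_prod (f := fun i (_ : Fin n → Bool) => csz Q δ (k i))]
    have : ∀ i, ∑' _ : Fin n → Bool, csz Q δ (k i) ≤
        ENNReal.ofReal (2 ^ n * 2 ^ δ) * ENNReal.ofReal ((Qs i).side ^ δ) := by
      intro i
      have hi := (Qs i).side_pos
      rw [tsum_fintype, Finset.sum_const, nsmul_eq_mul, ENNReal.ofReal_mul (by positivity),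
        mul_assoc, ← ENNReal.ofReal_mul (by positivity)]
      refine mul_le_mul' (by simp) (ENNReal.ofReal_le_ofReal ?_)
      rw [← Real.mul_rpow (by norm_num) hi.le]
      exact Real.rpow_le_rpow (by positivity) (hk i) hδ.le
    refine (ENNReal.tsum_le_tsum this).trans ?_
    rw [ENNReal.tsum_mul_left]
    refine (mul_le_mul' le_rfl h2.le).trans ?_
    rw [← ENNReal.ofReal_mul (by positivity)]
    apply ENNReal.ofReal_le_ofReal
    apply le_of_eq
    field_simp
  obtain ⟨κ, hκ, R, P, a, b, c⟩ := selection n δ hδ hδn Q E hE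
    (ι := ℕ × (Fin n → Bool)) (fun ib => k ib.1) (fun ib => p ib.1 ib.2)
    (by
      intro x hx
      obtain ⟨i, hi⟩ := mem_iUnion.1 (h1 hx)
      obtain ⟨b, hb⟩ := hp i x hi
      exact ⟨(i, b), hb⟩)
    (hS.trans_lt ((ENNReal.ofReal_lt_ofReal_iff hsd).2 (by linarith)))
  exact ⟨κ, hκ, R, P, a, b.trans hS, c⟩

lemma cheb (n : ℕ) (δ : ℝ) (hδ : 0 < δ) (hδn : δ ≤ n) (f : (Fin n → ℝ) → ℝ)
    (hf : bloNorm n δ f < ⊤) (Q : Cube n) (t : ℝ) (ht : 0 < t) :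
    hContent n δ {x | x ∈ Q.toSet ∧ t < |f x - essInfQ n δ f Q|} ≤
      ENNReal.ofReal ((bloNorm n δ f).toReal / t * Q.side ^ δ) := by
  have hs := Q.side_pos
  have hsd : 0 < Q.side ^ δ := by positivity
  have h1 : integH n δ (fun x => |f x - essInfQ n δ f Q|) Q.toSet / hContent n δ Q.toSet
      ≤ bloNorm n δ f :=
    le_iSup (fun Q : Cube n =>
      integH n δ (fun x => |f x - essInfQ n δ f Q|) Q.toSet / hContent n δ Q.toSet) Q
  rw [hC_cube n δ hδ hδn, ENNReal.div_le_iff (by simpa using hsd) ENNReal.ofReal_ne_top,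
    ← ENNReal.ofReal_toReal hf.ne, ← ENNReal.ofReal_mul (by positivity)] at h1
  have h2 : hContent n δ {x | x ∈ Q.toSet ∧ t < |f x - essInfQ n δ f Q|} * ENNReal.ofReal t ≤
      integH n δ (fun x => |f x - essInfQ n δ f Q|) Q.toSet := by
    unfold integH
    calc _ = ∫⁻ s in Ioc (0:ℝ) t,
          hContent n δ {x | x ∈ Q.toSet ∧ t < |f x - essInfQ n δ f Q|} := by simp
      _ ≤ ∫⁻ s in Ioc (0:ℝ) t,
          hContent n δ {x | x ∈ Q.toSet ∧ s < |f x - essInfQ n δ f Q|} := by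
          refine setLIntegral_mono' measurableSet_Ioc fun s hs => hC_mono n δ ?_
          rintro x ⟨hx, hx2⟩
          exact ⟨hx, hs.2.trans_lt hx2⟩
      _ ≤ _ := lintegral_mono_set fun s hs => hs.1
  have h3 := h2.trans h1
  rw [← ENNReal.le_div_iff_mul_le (by simp [ht]) (by simp), ← ENNReal.ofReal_div_of_pos ht] at h3
  refine h3.trans (le_of_eq ?_)
  congr 1; ring

lemma ess_nonneg (n : ℕ) (δ : ℝ) (f : (Fin n → ℝ) → ℝ) (Q : Cube n) : 0 ≤ essInfQ n δ f Q :=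
  Real.sInf_nonneg fun _ h => h.1.le

lemma ess_le (n : ℕ) (δ : ℝ) (f : (Fin n → ℝ) → ℝ) (Q : Cube n) (t : ℝ) (ht : 0 < t)
    (h : 0 < hContent n δ {x | x ∈ Q.toSet ∧ f x < t}) : essInfQ n δ f Q ≤ t :=
  csInf_le ⟨0, fun _ h => h.1.le⟩ ⟨ht, h⟩

lemma jn (n : ℕ) (δ : ℝ) (hδ : 0 < δ) (hδn : δ ≤ n) (f : (Fin n → ℝ) → ℝ)
    (hf : bloNorm n δ f < ⊤) (B : ℝ) (hB : B = (bloNorm n δ f).toReal) (hB0 : 0 < B)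
    (T : ℝ) (hT : T = (4 * (2 ^ n * 2 ^ δ) + 3 * 2 ^ δ) * B) (j : ℕ) : ∀ Q : Cube n,
    hContent n δ {x | x ∈ Q.toSet ∧ j * T < f x - essInfQ n δ f Q} ≤
      ENNReal.ofReal ((1 / 2) ^ j * Q.side ^ δ) := by
  have hA : (0:ℝ) < 2 ^ δ := by positivity
  have hM : (0:ℝ) < 2 ^ n * 2 ^ δ := by positivity
  induction j with
  | zero =>
    intro Q
    simpa using hC_le_cube n δ hδ _ Q (fun x hx => hx.1)
  | succ j ih =>
    intro Q
    have hsQ : 0 < Q.side ^ δ := Real.rpow_pos_of_pos Q.side_pos _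
    set K : ℝ := 4 * (2 ^ n * 2 ^ δ) with hK
    set t := K * B with ht
    have ht0 : 0 < t := by positivity
    set E := {x | x ∈ Q.toSet ∧ t < f x - essInfQ n δ f Q} with hEdef
    have hEs : hContent n δ E < ENNReal.ofReal (Q.side ^ δ / (2 * (2 ^ n * 2 ^ δ))) := by
      have hsub : E ⊆ {x | x ∈ Q.toSet ∧ t < |f x - essInfQ n δ f Q|} :=
        fun x hx => ⟨hx.1, hx.2.trans_le (le_abs_self _)⟩
      have h1 := (hC_mono n δ hsub).trans (cheb n δ hδ hδn f hf Q t ht0)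
      refine h1.trans_lt ?_
      rw [← hB, ENNReal.ofReal_lt_ofReal_iff (by positivity), ht, hK]
      have : B / (4 * (2 ^ n * 2 ^ δ) * B) * Q.side ^ δ =
        (Q.side ^ δ / (2 * (2 ^ n * 2 ^ δ))) / 2 := by field_simp; norm_num
      rw [this]
      exact half_lt_self (by positivity)
    obtain ⟨κ, hκ, R, P, hcov, hsum, hRP⟩ := step_cover n δ hδ hδn Q E (fun x hx => hx.1) hEs
    have hess : ∀ c, essInfQ n δ f (R c) ≤ essInfQ n δ f Q + T := by
      intro c
      obtain ⟨h2, hsub1, hsub2, hlt⟩ := hRP c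
      have hsR : 0 < (R c).side ^ δ := Real.rpow_pos_of_pos (R c).side_pos _
      have hP : essInfQ n δ f (P c) ≤ essInfQ n δ f Q + t := by
        refine le_of_forall_pos_le_add fun ε hε => ?_
        have hq := ess_nonneg n δ f Q
        refine ess_le n δ f (P c) _ (by positivity) ?_
        by_contra! h0
        have hu : (P c).toSet ⊆ (E ∩ (P c).toSet) ∪
            {x | x ∈ (P c).toSet ∧ f x < essInfQ n δ f Q + t + ε} := by
          intro x hx
          by_cases hxE : t < f x - essInfQ n δ f Q
          · exact Or.inl ⟨⟨hsub2 hx, hxE⟩, hx⟩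
          · exact Or.inr ⟨hx, by linarith⟩
        have := (hC_mono n δ hu).trans (hC_union n δ hδ _ _)
        rw [le_antisymm h0 zero_le, add_zero, hC_cube n δ hδ hδn] at this
        exact absurd this (not_le.2 hlt)
      have hR : essInfQ n δ f (R c) ≤ essInfQ n δ f (P c) + 3 * 2 ^ δ * B := by
        by_contra! hgt
        have hq := ess_nonneg n δ f (P c)
        have hAB : 0 < 2 ^ δ * B := by positivity
        have h0 : hContent n δ {x | x ∈ (R c).toSet ∧
            f x < essInfQ n δ f (P c) + 3 * 2 ^ δ * B} = 0 := by
          by_contra hne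
          have := ess_le n δ f (R c) _ (by positivity) (pos_iff_ne_zero.2 hne)
          linarith
        have hu : (R c).toSet ⊆ {x | x ∈ (R c).toSet ∧
            f x < essInfQ n δ f (P c) + 3 * 2 ^ δ * B} ∪
            {x | x ∈ (P c).toSet ∧ 2 * (2 ^ δ * B) < |f x - essInfQ n δ f (P c)|} := by
          intro x hx
          by_cases hxE : f x < essInfQ n δ f (P c) + 3 * 2 ^ δ * B
          · exact Or.inl ⟨hx, hxE⟩
          · exact Or.inr ⟨hsub1 hx, lt_of_lt_of_le (by linarith) (le_abs_self _)⟩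
        have h3 := (hC_mono n δ hu).trans (hC_union n δ hδ _ _)
        rw [h0, zero_add, hC_cube n δ hδ hδn] at h3
        have h4 := h3.trans (cheb n δ hδ hδn f hf (P c) _ (by positivity))
        rw [← hB, h2, Real.mul_rpow (by norm_num) (R c).side_pos.le,
          ENNReal.ofReal_le_ofReal_iff (by positivity)] at h4
        have : B / (2 * (2 ^ δ * B)) * (2 ^ δ * (R c).side ^ δ) = (R c).side ^ δ / 2 := by
          field_simp
        linarith
      rw [hT]; linarith
    have hfin : {x | x ∈ Q.toSet ∧ ((j + 1 : ℕ) : ℝ) * T < f x - essInfQ n δ f Q} ⊆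
        ⋃ c, {x | x ∈ (R c).toSet ∧ j * T < f x - essInfQ n δ f (R c)} := by
      rintro x ⟨hx, hx2⟩
      push_cast at hx2
      have hTt : t ≤ T := by rw [hT, ht]; nlinarith
      have hT0 : 0 < T := ht0.trans_le hTt
      have hjT : 0 ≤ j * T := by positivity
      have hxE : x ∈ E := ⟨hx, by linarith⟩
      obtain ⟨c, hc⟩ := mem_iUnion.1 (hcov hxE)
      refine mem_iUnion.2 ⟨c, hc, ?_⟩
      have := hess c
      linarith
    refine (hC_mono n δ hfin).trans ((hC_iUnion n δ hδ _).trans ?_)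
    refine (ENNReal.tsum_le_tsum fun c => ih (R c)).trans ?_
    simp_rw [fun c => ENNReal.ofReal_mul (p := (1 / 2 : ℝ) ^ j) (q := (R c).side ^ δ)
      (by positivity)]
    rw [ENNReal.tsum_mul_left]
    refine (mul_le_mul' le_rfl hsum).trans ?_
    rw [← ENNReal.ofReal_mul (by positivity)]
    apply ENNReal.ofReal_le_ofReal
    rw [pow_succ]; apply le_of_eq; ring

/-- John–Nirenberg inequality for BLO(ℝⁿ, ℋ^δ_∞). -/
theorem stmt11 (n : ℕ) (hn : 1 ≤ n) (δ : ℝ) (hδ0 : 0 < δ) (hδn : δ ≤ n) :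
    ∃ c C : ℝ, 0 < c ∧ 0 < C ∧
      ∀ f : (Fin n → ℝ) → ℝ, MemBLO n δ f → bloNorm n δ f ≠ 0 →
        ∀ Q : Cube n, ∀ t : ℝ, 0 < t →
          hContent n δ {x | x ∈ Q.toSet ∧ t < f x - essInfQ n δ f Q} ≤
            ENNReal.ofReal C * hContent n δ Q.toSet *
              ENNReal.ofReal (Real.exp (-(c * t) / (bloNorm n δ f).toReal)) := by
  set D : ℝ := 4 * (2 ^ n * 2 ^ δ) + 3 * 2 ^ δ with hD
  have hD0 : 0 < D := by positivity
  have hlog : 0 < Real.log 2 := Real.log_pos (by norm_num)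
  refine ⟨Real.log 2 / D, 2, by positivity, by norm_num, ?_⟩
  intro f hf hne Q t ht
  set B := (bloNorm n δ f).toReal with hB
  have hB0 : 0 < B := ENNReal.toReal_pos hne hf.2.ne
  have hT0 : 0 < D * B := by positivity
  have hsQ : 0 < Q.side ^ δ := Real.rpow_pos_of_pos Q.side_pos _
  have h1 := jn n δ hδ0 hδn f hf.2 B hB hB0 (D * B) (by rw [hD]) ⌊t / (D * B)⌋₊ Q
  have hfl : (⌊t / (D * B)⌋₊ : ℝ) * (D * B) ≤ t := by
    rw [← le_div_iff₀ hT0]; exact Nat.floor_le (by positivity)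
  have hsub : {x | x ∈ Q.toSet ∧ t < f x - essInfQ n δ f Q} ⊆
      {x | x ∈ Q.toSet ∧ (⌊t / (D * B)⌋₊ : ℝ) * (D * B) < f x - essInfQ n δ f Q} :=
    fun x hx => ⟨hx.1, hfl.trans_lt hx.2⟩
  refine (hC_mono n δ hsub).trans (h1.trans ?_)
  rw [hC_cube n δ hδ0 hδn, ← ENNReal.ofReal_mul (by norm_num), ← ENNReal.ofReal_mul (by positivity)]
  apply ENNReal.ofReal_le_ofReal
  have h2 := (Nat.lt_floor_add_one (t / (D * B))).le
  have h3 : (1 / 2 : ℝ) ^ ⌊t / (D * B)⌋₊ ≤ 2 * Real.exp (-(Real.log 2 / D * t) / B) := by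
    have e1 : (1 / 2 : ℝ) ^ ⌊t / (D * B)⌋₊ = Real.exp (-(Real.log 2) * ⌊t / (D * B)⌋₊) := by
      rw [mul_comm (-Real.log 2), Real.exp_nat_mul, Real.exp_neg, Real.exp_log (by norm_num)]
      norm_num
    have e2 : 2 * Real.exp (-(Real.log 2 / D * t) / B) =
        Real.exp (Real.log 2 + -(Real.log 2) * (t / (D * B))) := by
      rw [Real.exp_add, Real.exp_log (by norm_num)]
      congr 2
      field_simp
    rw [e1, e2]
    apply Real.exp_le_exp.2
    nlinarith
  calc _ ≤ 2 * Real.exp (-(Real.log 2 / D * t) / B) * Q.side ^ δ := by gcongr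
    _ = _ := by ring
end
end

section
/- Let n ≥ 1 be an integer, δ ∈ (0, n] and p ∈ (1, ∞). There exists a constant C > 0, depending only on n, δ and p, such that for every weight f ∈ A_{p,δ} with f(x) ∈ (0, ∞) for every x ∈ ℝⁿ and ln f ∈ L¹_loc(ℝⁿ, ℋ^δ_∞): (1) sup_Q (1/\~ℋ^δ_∞(Q)) ∫_Q exp(ln f(x) − (ln f)_{Q,δ}) d\~ℋ^δ_∞ ≤ C · [f]_{A_{p,δ}}, and (2) sup_Q (1/\~ℋ^δ_∞(Q)) ∫_Q exp(−(1/(p−1)) · (ln f(x) − (ln f)_{Q,δ})) d\~ℋ^δ_∞ ≤ C · [f]_{A_{p,δ}}^{1/(p−1)}, where the suprema are over all cubes Q of ℝⁿ. -/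
open scoped ENNReal
open Set MeasureTheory

noncomputable section

theorem dContent_le_of_cover {n : ℕ} {δ : ℝ} {ι : Type} [Countable ι] [Infinite ι]
    (E : Set (Fin n → ℝ)) (Qs : ι → Cube n) (h1 : ∀ i, (Qs i).IsDyadic)
    (h2 : E ⊆ ⋃ i, (Qs i).toSet) :
    dContent n δ E ≤ ∑' i, ENNReal.ofReal ((Qs i).side ^ δ) := by
  obtain ⟨e⟩ := nonempty_equiv_of_countable (α := ℕ) (β := ι)
  unfold dContent
  refine (iInf₂_le (fun i => Qs (e i)) ⟨fun i => h1 _, ?_⟩).trans ?_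
  · exact (e.tsum_eq (fun i => ENNReal.ofReal ((Qs i).side ^ δ))).le
  · intro x hx
    obtain ⟨i, hi⟩ := mem_iUnion.1 (h2 hx)
    exact mem_iUnion.2 ⟨e.symm i, by simpa using hi⟩

theorem dContent_mono {n : ℕ} {δ : ℝ} {E F : Set (Fin n → ℝ)} (h : E ⊆ F) :
    dContent n δ E ≤ dContent n δ F := by
  unfold dContent
  refine le_iInf₂ fun Qs hQ => iInf₂_le Qs ⟨hQ.1, h.trans hQ.2⟩

theorem hContent_mono {n : ℕ} {δ : ℝ} {E F : Set (Fin n → ℝ)} (h : E ⊆ F) :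
    hContent n δ E ≤ hContent n δ F := by
  unfold hContent
  refine le_iInf₂ fun Qs hQ => iInf₂_le Qs (h.trans hQ)

theorem hContent_le_dContent {n : ℕ} {δ : ℝ} (E : Set (Fin n → ℝ)) :
    hContent n δ E ≤ dContent n δ E := by
  unfold hContent dContent
  refine le_iInf₂ fun Qs hQ => iInf₂_le Qs hQ.2

theorem dContent_union {n : ℕ} {δ : ℝ} (E F : Set (Fin n → ℝ)) :
    dContent n δ (E ∪ F) ≤ dContent n δ E + dContent n δ F := by
  have key : ∀ Qs : ℕ → Cube n, ((∀ i, (Qs i).IsDyadic) ∧ E ⊆ ⋃ i, (Qs i).toSet) →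
      ∀ Rs : ℕ → Cube n, ((∀ i, (Rs i).IsDyadic) ∧ F ⊆ ⋃ i, (Rs i).toSet) →
      dContent n δ (E ∪ F) ≤ ∑' i, ENNReal.ofReal ((Qs i).side ^ δ)
        + ∑' i, ENNReal.ofReal ((Rs i).side ^ δ) := by
    intro Qs hQ Rs hR
    refine (dContent_le_of_cover (ι := ℕ ⊕ ℕ) _ (Sum.elim Qs Rs) ?_ ?_).trans ?_
    · rintro (i | i)
      · exact hQ.1 i
      · exact hR.1 i
    · rintro x (hx | hx)
      · obtain ⟨i, hi⟩ := mem_iUnion.1 (hQ.2 hx)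
        exact mem_iUnion.2 ⟨Sum.inl i, hi⟩
      · obtain ⟨i, hi⟩ := mem_iUnion.1 (hR.2 hx)
        exact mem_iUnion.2 ⟨Sum.inr i, hi⟩
    · rw [Summable.tsum_sum ENNReal.summable ENNReal.summable]
      simp
  conv_rhs => unfold dContent
  simp only [ENNReal.iInf_add, ENNReal.add_iInf]
  exact le_iInf fun Qs => le_iInf fun hQ => le_iInf fun Rs => le_iInf fun hR => key _ (by assumption) _ (by assumption)

theorem cube_dyadic_cover {n : ℕ} (Q : Cube n) : ∃ R : (Fin n → Bool) → Cube n,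
    (∀ b, (R b).IsDyadic) ∧ (∀ b, (R b).side ≤ 2 * Q.side) ∧ Q.toSet ⊆ ⋃ b, (R b).toSet := by
  obtain ⟨k, hk1, hk2⟩ := exists_mem_Ico_zpow Q.side_pos (one_lt_two : (1:ℝ) < 2)
  set S : ℝ := (2:ℝ) ^ (k + 1) with hS
  have hS0 : 0 < S := by positivity
  have hS2 : S = 2 * 2 ^ k := by rw [hS, zpow_add₀ (by norm_num)]; ring
  refine ⟨fun b => ⟨fun i => ((⌊Q.corner i / S⌋ + (if b i then 1 else 0) : ℤ) : ℝ) * S, S, hS0⟩,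
    fun b => ⟨k + 1, fun i => ⌊Q.corner i / S⌋ + (if b i then 1 else 0), rfl, fun i => rfl⟩,
    fun b => ?_, ?_⟩
  · show S ≤ _
    rw [hS2]; linarith
  · intro x hx
    refine mem_iUnion.2 ⟨fun i => decide (((⌊Q.corner i / S⌋ : ℝ) + 1) * S ≤ x i), ?_⟩
    intro i
    have h1 := (hx i).1
    have h2 := (hx i).2
    have h3 : (⌊Q.corner i / S⌋ : ℝ) * S ≤ Q.corner i := by
      rw [← le_div_iff₀ hS0]; exact Int.floor_le _
    have h4 : Q.corner i < ((⌊Q.corner i / S⌋ : ℝ) + 1) * S := by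
      rw [← div_lt_iff₀ hS0]; exact Int.lt_floor_add_one _
    by_cases hc : ((⌊Q.corner i / S⌋ : ℝ) + 1) * S ≤ x i
    · simp only [hc, decide_true, if_true]
      push_cast
      refine ⟨hc, ?_⟩
      linarith
    · simp only [hc, decide_false]
      push Not at hc
      simp
      constructor <;> linarith

/-- comparison constant -/
def KK (n : ℕ) (δ : ℝ) : ℝ := 2 ^ n * 2 ^ δ

theorem KK_pos (n : ℕ) (δ : ℝ) : 0 < KK n δ := by unfold KK; positivity

theorem dContent_le_hContent {n : ℕ} {δ : ℝ} (hδ : 0 < δ) (E : Set (Fin n → ℝ)) :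
    dContent n δ E ≤ ENNReal.ofReal (KK n δ) * hContent n δ E := by
  have key : ∀ Qs : ℕ → Cube n, (E ⊆ ⋃ i, (Qs i).toSet) →
      dContent n δ E ≤ ENNReal.ofReal (KK n δ) * ∑' i, ENNReal.ofReal ((Qs i).side ^ δ) := by
    intro Qs hQ
    choose R hR1 hR2 hR3 using fun i => cube_dyadic_cover (Qs i)
    refine (dContent_le_of_cover (ι := ℕ × (Fin n → Bool)) _ (fun q => R q.1 q.2)
      (fun q => hR1 _ _) ?_).trans ?_
    · intro x hx
      obtain ⟨i, hi⟩ := mem_iUnion.1 (hQ hx)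
      obtain ⟨b, hb⟩ := mem_iUnion.1 (hR3 i hi)
      exact mem_iUnion.2 ⟨(i, b), hb⟩
    · rw [ENNReal.tsum_prod', ← ENNReal.tsum_mul_left]
      refine ENNReal.tsum_le_tsum fun i => ?_
      rw [tsum_fintype]
      have : ∀ b ∈ Finset.univ, ENNReal.ofReal ((R i b).side ^ δ) ≤
          ENNReal.ofReal ((2:ℝ) ^ δ * (Qs i).side ^ δ) := by
        intro b _
        apply ENNReal.ofReal_le_ofReal
        rw [← Real.mul_rpow (by norm_num) (Qs i).side_pos.le]
        exact Real.rpow_le_rpow (R i b).side_pos.le (hR2 i b) hδ.le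
      refine (Finset.sum_le_card_nsmul _ _ _ this).trans ?_
      rw [← ENNReal.ofReal_mul (KK_pos n δ).le, nsmul_eq_mul, ← ENNReal.ofReal_natCast,
        ← ENNReal.ofReal_mul (by positivity)]
      apply ENNReal.ofReal_le_ofReal
      simp [KK, mul_assoc]
  conv_rhs => unfold hContent
  have hK : ENNReal.ofReal (KK n δ) ≠ 0 := by simpa using KK_pos n δ
  rw [ENNReal.mul_iInf_of_ne hK ENNReal.ofReal_ne_top]
  refine le_iInf fun Qs => ?_
  rw [ENNReal.mul_iInf_of_ne hK ENNReal.ofReal_ne_top]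
  exact le_iInf fun hQ => key Qs hQ

theorem hContent_cube_lt_top {n : ℕ} {δ : ℝ} (hδ : 0 < δ) (Q : Cube n) :
    hContent n δ Q.toSet < ⊤ := by
  have : hContent n δ Q.toSet ≤ ∑' i : ℕ, ENNReal.ofReal ((Q.side * (1/2) ^ i) ^ δ) := by
    unfold hContent
    refine iInf₂_le (fun i : ℕ => (⟨Q.corner, Q.side * (1/2) ^ i, mul_pos Q.side_pos (by positivity)⟩ : Cube n)) ?_
    intro x hx
    refine mem_iUnion.2 ⟨0, ?_⟩
    simpa [Cube.toSet] using hx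
  refine this.trans_lt ?_
  have h2 : ∀ i : ℕ, (Q.side * (1/2) ^ i) ^ δ = Q.side ^ δ * ((1/2) ^ δ) ^ i := by
    intro i
    rw [Real.mul_rpow Q.side_pos.le (by positivity), ← Real.rpow_natCast, ← Real.rpow_natCast,
      ← Real.rpow_mul (by norm_num), ← Real.rpow_mul (by norm_num), mul_comm δ]
  have h3 : Summable fun i : ℕ => (Q.side * (1/2) ^ i) ^ δ := by
    simp_rw [h2]
    refine (summable_geometric_of_lt_one (by positivity) ?_).mul_left _
    exact Real.rpow_lt_one (by norm_num) (by norm_num) hδ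
  exact h3.tsum_ofReal_lt_top

theorem dContent_cube_lt_top {n : ℕ} {δ : ℝ} (hδ : 0 < δ) (Q : Cube n) :
    dContent n δ Q.toSet < ⊤ :=
  (dContent_le_hContent hδ _).trans_lt
    (ENNReal.mul_lt_top ENNReal.ofReal_lt_top (hContent_cube_lt_top hδ Q))

theorem integD_le_integH {n : ℕ} {δ : ℝ} (hδ : 0 < δ) (f : (Fin n → ℝ) → ℝ)
    (E : Set (Fin n → ℝ)) : integD n δ f E ≤ ENNReal.ofReal (KK n δ) * integH n δ f E := by
  unfold integD integH
  rw [← lintegral_const_mul' _ _ ENNReal.ofReal_ne_top]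
  exact lintegral_mono fun t => dContent_le_hContent hδ _

theorem integD_mono {n : ℕ} {δ : ℝ} {f g : (Fin n → ℝ) → ℝ} {E F : Set (Fin n → ℝ)}
    (h : E ⊆ F) (hfg : ∀ x ∈ E, f x ≤ g x) : integD n δ f E ≤ integD n δ g F :=
  lintegral_mono fun _ => dContent_mono fun x hx => ⟨h hx.1, hx.2.trans_le (hfg x hx.1)⟩

theorem lintegral_affine (F : ℝ → ℝ≥0∞) (α β c : ℝ) (hβ : 0 < β) :
    ∫⁻ t in Ioi (α + β * c), F t = ENNReal.ofReal β * ∫⁻ u in Ioi c, F (α + β * u) := by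
  have him : (fun u => α + β * u) '' Ioi c = Ioi (α + β * c) := by
    ext t
    simp only [mem_image, mem_Ioi]
    constructor
    · rintro ⟨u, hu, rfl⟩
      have := mul_lt_mul_of_pos_left hu hβ
      linarith
    · intro ht
      refine ⟨(t - α) / β, ?_, by field_simp; ring⟩
      rw [lt_div_iff₀ hβ]; linarith
  rw [← him, lintegral_image_eq_lintegral_abs_deriv_mul measurableSet_Ioi (f' := fun _ => β)
    (fun x _ => by simpa using (((hasDerivAt_id x).const_mul β).const_add α).hasDerivWithinAt)
    (fun x _ y _ h => by simpa [hβ.ne'] using h), lintegral_const_mul' _ _ ENNReal.ofReal_ne_top,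
    abs_of_pos hβ]

theorem lintegral_affine_neg (F : ℝ → ℝ≥0∞) (β c : ℝ) (hβ : 0 < β) :
    ∫⁻ t in Ioo 0 (β * c), F t = ENNReal.ofReal β * ∫⁻ u in Ioo 0 c, F (β * (c - u)) := by
  have him : (fun u => β * (c - u)) '' Ioo 0 c = Ioo 0 (β * c) := by
    ext t
    simp only [mem_image, mem_Ioo]
    constructor
    · rintro ⟨u, ⟨hu, hu'⟩, rfl⟩
      exact ⟨mul_pos hβ (by linarith), mul_lt_mul_of_pos_left (by linarith) hβ⟩
    · rintro ⟨ht, ht'⟩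
      refine ⟨c - t / β, ⟨?_, ?_⟩, by field_simp; ring⟩
      · have : t / β < c := by rw [div_lt_iff₀ hβ]; linarith
        linarith
      · have : 0 < t / β := by positivity
        linarith
  rw [← him, lintegral_image_eq_lintegral_abs_deriv_mul measurableSet_Ioo (f' := fun _ => -β)
    (fun x _ => by simpa using (((hasDerivAt_id x).const_sub c).const_mul β).hasDerivWithinAt)
    (fun x _ y _ h => by simpa [hβ.ne'] using h), lintegral_const_mul' _ _ ENNReal.ofReal_ne_top,
    abs_neg, abs_of_pos hβ]

theorem integD_const_mul {n : ℕ} {δ : ℝ} (f : (Fin n → ℝ) → ℝ) (E : Set (Fin n → ℝ)) {c : ℝ}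
    (hc : 0 < c) : integD n δ (fun x => c * f x) E = ENNReal.ofReal c * integD n δ f E := by
  have := lintegral_affine (fun t => dContent n δ {x | x ∈ E ∧ t < c * f x}) 0 c 0 hc
  simp only [zero_add, mul_zero] at this
  unfold integD
  rw [this]
  congr 1
  simp_rw [mul_lt_mul_iff_right₀ hc]

theorem jensen_pos {n : ℕ} {δ : ℝ} (h : (Fin n → ℝ) → ℝ) (E : Set (Fin n → ℝ))
    (hh : ∀ x ∈ E, 0 ≤ h x) (hm : dContent n δ E ≠ ⊤) (hI : integD n δ h E ≠ ⊤)
    (l : ℝ) (hl : 0 < l) (s : ℝ) :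
    ENNReal.ofReal (Real.exp s *
      ((1 - s) * (dContent n δ E).toReal + l * (integD n δ h E).toReal)) ≤
    integD n δ (fun x => Real.exp (l * h x)) E := by
  set m := dContent n δ E with hmdef
  set I := integD n δ h E with hIdef
  have hexp : ∀ x, Real.exp s * (1 - s) + (Real.exp s * l) * h x ≤ Real.exp (l * h x) := by
    intro x
    have := Real.add_one_le_exp (l * h x - s)
    calc _ = Real.exp s * (l * h x - s + 1) := by ring
      _ ≤ Real.exp s * Real.exp (l * h x - s) := by gcongr
      _ = _ := by rw [← Real.exp_add]; ring_nf
  set α := Real.exp s * (1 - s) with hα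
  set β := Real.exp s * l with hβ
  have hβ0 : 0 < β := by positivity
  have e1 : Real.exp s * ((1 - s) * m.toReal + l * I.toReal) = α * m.toReal + β * I.toReal := by
    rw [hα, hβ]; ring
  rw [e1]
  refine le_trans ?_ (integD_mono (f := fun x => α + β * h x) subset_rfl (fun x _ => hexp x))
  set F : ℝ → ℝ≥0∞ := fun t => dContent n δ {x | x ∈ E ∧ t < α + β * h x} with hF
  have hsub : ∀ u, F (α + β * u) = dContent n δ {x | x ∈ E ∧ u < h x} := by
    intro u
    simp only [hF, add_lt_add_iff_left, mul_lt_mul_iff_right₀ hβ0]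
  rcases le_total 0 α with h0 | h0
  · have hsplit : (∫⁻ t in Ioo 0 α, F t) + ∫⁻ t in Ioi α, F t ≤ ∫⁻ t in Ioi 0, F t := by
      rw [← lintegral_union measurableSet_Ioi]
      · refine lintegral_mono_set ?_
        rintro t (ht | ht)
        · exact ht.1
        · exact h0.trans_lt ht
      · rw [Set.disjoint_left]
        intro t ht ht'
        exact lt_asymm ht.2 ht'
    refine le_trans ?_ hsplit
    have a1 : ENNReal.ofReal α * m ≤ ∫⁻ t in Ioo 0 α, F t := by
      have : ∫⁻ t in Ioo 0 α, m ≤ ∫⁻ t in Ioo 0 α, F t := by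
        refine setLIntegral_mono' measurableSet_Ioo fun t ht => dContent_mono fun x hx => ⟨hx, ?_⟩
        have := mul_nonneg hβ0.le (hh x hx)
        linarith [ht.2]
      refine le_trans ?_ this
      simp [mul_comm]
    have a2 : ∫⁻ t in Ioi α, F t = ENNReal.ofReal β * I := by
      have := lintegral_affine F α β 0 hβ0
      simp only [mul_zero, add_zero] at this
      rw [this]
      simp_rw [hsub]
      rfl
    rw [a2, ENNReal.ofReal_add (by positivity) (by positivity), ENNReal.ofReal_mul h0,
      ENNReal.ofReal_mul hβ0.le, ENNReal.ofReal_toReal hm, ENNReal.ofReal_toReal hI]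
    gcongr
  · set c := -α / β with hc
    have hc0 : 0 ≤ c := div_nonneg (by linarith) hβ0.le
    have b1 : ∫⁻ t in Ioi 0, F t = ENNReal.ofReal β *
        ∫⁻ u in Ioi c, dContent n δ {x | x ∈ E ∧ u < h x} := by
      have := lintegral_affine F α β c hβ0
      have e : α + β * c = 0 := by rw [hc]; field_simp; ring
      rw [e] at this
      rw [this]
      simp_rw [hsub]
    have b2 : I ≤ ENNReal.ofReal c * m + ∫⁻ u in Ioi c, dContent n δ {x | x ∈ E ∧ u < h x} := by
      have : I = (∫⁻ u in Ioc 0 c, dContent n δ {x | x ∈ E ∧ u < h x}) +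
          ∫⁻ u in Ioi c, dContent n δ {x | x ∈ E ∧ u < h x} := by
        rw [← lintegral_union measurableSet_Ioi, Ioc_union_Ioi_eq_Ioi hc0]
        · rfl
        · rw [Set.disjoint_left]
          intro t ht ht'
          exact absurd ht.2 (not_le.2 ht')
      rw [this]
      gcongr
      calc _ ≤ ∫⁻ u in Ioc 0 c, m := lintegral_mono fun u => dContent_mono fun x hx => hx.1
        _ = _ := by simp [mul_comm]
    change _ ≤ ∫⁻ t in Ioi 0, F t
    rw [b1]
    generalize (∫⁻ u in Ioi c, dContent n δ {x | x ∈ E ∧ u < h x}) = X at b2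
    have e2 : α * m.toReal + β * I.toReal = β * (I.toReal - c * m.toReal) := by
      rw [hc]; field_simp; ring
    rw [e2, ENNReal.ofReal_mul hβ0.le]
    gcongr
    rw [ENNReal.ofReal_sub _ (by positivity), ENNReal.ofReal_mul hc0, ENNReal.ofReal_toReal hm,
      ENNReal.ofReal_toReal hI]
    exact tsub_le_iff_left.2 b2

theorem jensen_neg {n : ℕ} {δ : ℝ} (h : (Fin n → ℝ) → ℝ) (E : Set (Fin n → ℝ))
    (hm : dContent n δ E ≠ ⊤) (hI : integD n δ h E ≠ ⊤)
    (l : ℝ) (hl : 0 < l) (s : ℝ) :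
    ENNReal.ofReal (Real.exp s *
      ((1 - s) * (dContent n δ E).toReal - l * (integD n δ h E).toReal)) ≤
    integD n δ (fun x => Real.exp (-l * h x)) E := by
  set m := dContent n δ E with hmdef
  set I := integD n δ h E with hIdef
  have hm0 : 0 ≤ m.toReal := ENNReal.toReal_nonneg
  have hI0 : 0 ≤ I.toReal := ENNReal.toReal_nonneg
  rcases le_or_gt 1 s with hs | hs
  · rw [ENNReal.ofReal_of_nonpos]
    · exact zero_le
    · apply mul_nonpos_of_nonneg_of_nonpos (Real.exp_pos s).le
      nlinarith [mul_nonneg hl.le hI0, mul_nonneg (sub_nonneg.2 hs) hm0]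
  have hexp : ∀ x, Real.exp s * ((1 - s) - l * h x) ≤ Real.exp (-l * h x) := by
    intro x
    have := Real.add_one_le_exp (-l * h x - s)
    calc _ = Real.exp s * (-l * h x - s + 1) := by ring
      _ ≤ Real.exp s * Real.exp (-l * h x - s) := by gcongr
      _ = _ := by rw [← Real.exp_add]; ring_nf
  have hc0 : 0 < 1 - s := by linarith
  set c := 1 - s with hc
  have hβ0 := Real.exp_pos s
  set β := Real.exp s with hβ
  refine le_trans ?_ (integD_mono (f := fun x => β * (c - l * h x)) subset_rfl (fun x _ => hexp x))
  set F : ℝ → ℝ≥0∞ := fun t => dContent n δ {x | x ∈ E ∧ t < β * (c - l * h x)} with hF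
  set G : ℝ → ℝ≥0∞ := fun u => dContent n δ {x | x ∈ E ∧ l * h x < u} with hG
  have hsub : ∀ u, F (β * (c - u)) = G u := by
    intro u
    simp only [hF, hG, mul_lt_mul_iff_right₀ hβ0, sub_lt_sub_iff_left]
  have b1 : ENNReal.ofReal β * ∫⁻ u in Ioo 0 c, G u ≤ ∫⁻ t in Ioi 0, F t := by
    have := lintegral_affine_neg F β c hβ0
    simp_rw [hsub] at this
    rw [← this]
    exact lintegral_mono_set fun t ht => ht.1
  refine le_trans ?_ b1
  rw [ENNReal.ofReal_mul hβ0.le]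
  gcongr
  have key : ∀ r : ℝ, 1 < r → ENNReal.ofReal c * m ≤
      (∫⁻ u in Ioo 0 c, G u) + ENNReal.ofReal (l * r) * I := by
    intro r hr
    have hr0 : 0 < l * r := by positivity
    set ψ : ℝ → ℝ≥0∞ := fun u => dContent n δ {x | x ∈ E ∧ u < (l * r) * h x} with hψ
    have hanti : Antitone ψ := fun a b hab => dContent_mono fun x hx => ⟨hx.1, hab.trans_lt hx.2⟩
    have e1 : ENNReal.ofReal (l * r) * I = ∫⁻ u in Ioi 0, ψ u := (integD_const_mul h E hr0).symm
    rw [e1]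
    calc ENNReal.ofReal c * m = ∫⁻ u in Ioo 0 c, m := by simp [mul_comm]
      _ ≤ ∫⁻ u in Ioo 0 c, (G u + ψ u) := by
        refine setLIntegral_mono' measurableSet_Ioo fun u hu => ?_
        refine le_trans (dContent_mono ?_) (dContent_union _ _)
        intro x hx
        rcases lt_or_ge (l * h x) u with h1 | h1
        · exact Or.inl ⟨hx, h1⟩
        · refine Or.inr ⟨hx, ?_⟩
          have : 0 < l * h x := hu.1.trans_le h1
          nlinarith
      _ = (∫⁻ u in Ioo 0 c, G u) + ∫⁻ u in Ioo 0 c, ψ u :=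
        lintegral_add_right _ hanti.measurable
      _ ≤ _ := by
        gcongr
        exact fun t ht => ht.1
  generalize (∫⁻ u in Ioo 0 c, G u) = X at key
  by_cases hX : X = ⊤
  · simp [hX]
  apply ENNReal.ofReal_le_of_le_toReal
  have key' : ∀ r : ℝ, 1 < r → c * m.toReal ≤ X.toReal + l * r * I.toReal := by
    intro r hr
    have h1 := ENNReal.toReal_mono (by finiteness) (key r hr)
    rw [ENNReal.toReal_add hX (by finiteness), ENNReal.toReal_mul, ENNReal.toReal_mul,
      ENNReal.toReal_ofReal hc0.le, ENNReal.toReal_ofReal (by positivity)] at h1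
    exact h1
  refine le_of_forall_pos_le_add fun ε hε => ?_
  have hd : 0 < l * I.toReal + 1 := by positivity
  have := key' (1 + ε / (l * I.toReal + 1)) (by linarith [div_pos hε hd])
  have h2 : ε / (l * I.toReal + 1) * (l * I.toReal) ≤ ε := by
    rw [div_mul_eq_mul_div, div_le_iff₀ hd]
    nlinarith
  nlinarith

theorem jensen_avg {n : ℕ} {δ : ℝ} (hδ : 0 < δ) (g : (Fin n → ℝ) → ℝ) (hg : MemL1loc n δ g)
    (Q : Cube n) (hQ : dContent n δ Q.toSet ≠ 0) (l : ℝ) (hl : l ≠ 0) :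
    ENNReal.ofReal (Real.exp (l * avgQ n δ g Q)) ≤
      2 * (integD n δ (fun x => Real.exp (l * g x)) Q.toSet / dContent n δ Q.toSet) := by
  have hD := (dContent_cube_lt_top hδ Q).ne
  set P := Q.toSet ∩ {x | 0 ≤ g x} with hP
  set N := Q.toSet ∩ {x | g x < 0} with hN
  have hPQ : P ⊆ Q.toSet := inter_subset_left
  have hNQ : N ⊆ Q.toSet := inter_subset_left
  have hPm : dContent n δ P ≠ ⊤ := ne_top_of_le_ne_top hD (dContent_mono hPQ)
  have hNm : dContent n δ N ≠ ⊤ := ne_top_of_le_ne_top hD (dContent_mono hNQ)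
  have hint : integD n δ (fun x => |g x|) Q.toSet ≠ ⊤ := by
    have hK := hg.2 (Icc Q.corner (fun i => Q.corner i + Q.side)) isCompact_Icc
    have h1 := (integD_le_integH hδ (fun x => |g x|) (Icc Q.corner (fun i => Q.corner i + Q.side)))
    refine ne_top_of_le_ne_top (ENNReal.mul_ne_top ENNReal.ofReal_ne_top hK.ne)
      (le_trans (integD_mono ?_ fun x _ => le_rfl) h1)
    intro x hx
    exact ⟨fun i => (hx i).1, fun i => (hx i).2.le⟩
  have hPI : integD n δ g P ≠ ⊤ :=
    ne_top_of_le_ne_top hint (integD_mono hPQ fun x _ => le_abs_self _)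
  have hNI : integD n δ (fun x => -g x) N ≠ ⊤ :=
    ne_top_of_le_ne_top hint (integD_mono hNQ fun x _ => neg_le_abs _)
  have hsum : dContent n δ Q.toSet ≤ dContent n δ P + dContent n δ N := by
    refine le_trans (dContent_mono ?_) (dContent_union _ _)
    intro x hx
    rcases le_or_gt 0 (g x) with h | h
    · exact Or.inl ⟨hx, h⟩
    · exact Or.inr ⟨hx, h⟩
  have havg : avgQ n δ g Q = ((integD n δ g P).toReal - (integD n δ (fun x => -g x) N).toReal) /
    ((dContent n δ P).toReal + (dContent n δ N).toReal) := rfl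
  set A := avgQ n δ g Q with hA
  set T := integD n δ (fun x => Real.exp (l * g x)) Q.toSet with hT
  set mP := dContent n δ P
  set mN := dContent n δ N
  set IP := integD n δ g P with hIP
  set IN := integD n δ (fun x => -g x) N with hIN
  have hpos : 0 < mP.toReal + mN.toReal := by
    rw [← ENNReal.toReal_add hPm hNm]
    refine ENNReal.toReal_pos ?_ (by finiteness)
    intro h0
    rw [h0] at hsum
    exact hQ (le_antisymm hsum zero_le)
  have hAeq : A * (mP.toReal + mN.toReal) = IP.toReal - IN.toReal := by
    rw [havg]; field_simp
  have hPp : ∀ s, ENNReal.ofReal (Real.exp s * ((1 - s) * mP.toReal + l * IP.toReal)) ≤ T := by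
    intro s
    refine le_trans ?_ (integD_mono (n := n) (δ := δ) hPQ fun x _ => le_rfl)
    rcases lt_or_gt_of_ne hl with h | h
    · have := jensen_neg (n := n) (δ := δ) g P hPm hPI (-l) (by linarith) s
      simpa [sub_neg_eq_add] using this
    · exact jensen_pos g P (fun x hx => hx.2) hPm hPI l h s
  have hNp : ∀ s, ENNReal.ofReal (Real.exp s * ((1 - s) * mN.toReal - l * IN.toReal)) ≤ T := by
    intro s
    refine le_trans ?_ (integD_mono (n := n) (δ := δ) hNQ fun x _ => le_rfl)
    rcases lt_or_gt_of_ne hl with h | h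
    · have := jensen_pos (n := n) (δ := δ) (fun x => - g x) N
        (fun x hx => by have : g x < 0 := hx.2
                        linarith) hNm hNI (-l) (by linarith) s
      simpa [sub_eq_add_neg] using this
    · have := jensen_neg (n := n) (δ := δ) (fun x => - g x) N hNm hNI l h s
      simpa using this
  have hfin : ENNReal.ofReal (Real.exp (l * A)) * dContent n δ Q.toSet ≤ 2 * T := by
    calc _ ≤ ENNReal.ofReal (Real.exp (l * A)) * (mP + mN) := by gcongr
      _ = ENNReal.ofReal (Real.exp (l * A) * (mP.toReal + mN.toReal)) := by
        rw [ENNReal.ofReal_mul (Real.exp_pos _).le,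
          ENNReal.ofReal_add ENNReal.toReal_nonneg ENNReal.toReal_nonneg,
          ENNReal.ofReal_toReal hPm, ENNReal.ofReal_toReal hNm]
      _ = ENNReal.ofReal (Real.exp (l * A) * ((1 - l * A) * mP.toReal + l * IP.toReal) +
          Real.exp (l * A) * ((1 - l * A) * mN.toReal - l * IN.toReal)) := by
        congr 1
        linear_combination (Real.exp (l * A) * l) * hAeq
      _ ≤ _ := ENNReal.ofReal_add_le
      _ ≤ T + T := add_le_add (hPp _) (hNp _)
      _ = 2 * T := (two_mul _).symm
  rw [← mul_div_assoc, ENNReal.le_div_iff_mul_le (Or.inl hQ) (Or.inl hD)]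
  exact hfin

theorem integD_zero_of {n : ℕ} {δ : ℝ} (f : (Fin n → ℝ) → ℝ) (E : Set (Fin n → ℝ))
    (h : dContent n δ E = 0) : integD n δ f E = 0 := by
  have : ∀ t, dContent n δ {x | x ∈ E ∧ t < f x} = 0 := fun t =>
    le_antisymm ((dContent_mono fun x hx => hx.1).trans h.le) zero_le
  simp [integD, this]

theorem avgD_le_avgH {n : ℕ} {δ : ℝ} (hδ : 0 < δ) (f : (Fin n → ℝ) → ℝ) (E : Set (Fin n → ℝ)) :
    integD n δ f E / dContent n δ E ≤
      ENNReal.ofReal (KK n δ) * (integH n δ f E / hContent n δ E) := by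
  rw [← mul_div_assoc]
  exact ENNReal.div_le_div (integD_le_integH hδ f E) (hContent_le_dContent E)

/-- exponential integrability of `ln f − (ln f)_{Q,δ}` for `f ∈ A_{p,δ}`. -/
theorem stmt13 (n : ℕ) (hn : 1 ≤ n) (δ p : ℝ) (hδ0 : 0 < δ) (hδn : δ ≤ n) (hp : 1 < p) :
    ∃ C : ℝ, 0 < C ∧ ∀ f : (Fin n → ℝ) → ℝ, (∀ x, 0 < f x) → MemAp n δ p f →
      MemL1loc n δ (fun x => Real.log (f x)) →
      (⨆ Q : Cube n,
          integD n δ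
              (fun x => Real.exp (Real.log (f x) - avgQ n δ (fun y => Real.log (f y)) Q))
              Q.toSet /
            dContent n δ Q.toSet) ≤
          ENNReal.ofReal C * apConst n δ p f ∧
      (⨆ Q : Cube n,
          integD n δ
              (fun x => Real.exp (-(1 / (p - 1)) *
                (Real.log (f x) - avgQ n δ (fun y => Real.log (f y)) Q)))
              Q.toSet /
            dContent n δ Q.toSet) ≤
          ENNReal.ofReal C * apConst n δ p f ^ (1 / (p - 1)) := by
  have hp1 : 0 < p - 1 := by linarith
  set q : ℝ := 1 / (p - 1) with hq
  have hq0 : 0 < q := by positivity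
  have hqp : q * (p - 1) = 1 := by rw [hq]; field_simp
  have hK := KK_pos n δ
  set K := KK n δ with hKdef
  refine ⟨(2 * K) ^ (p - 1) * K + (2 * K) ^ q * K, by positivity, ?_⟩
  intro f hf _ hlog
  set g : (Fin n → ℝ) → ℝ := fun y => Real.log (f y) with hg
  have hg1 : ∀ x, Real.exp (1 * g x) = f x := fun x => by simp [hg, Real.exp_log (hf x)]
  have hg2 : ∀ x, Real.exp (-q * g x) = f x ^ (-q) := fun x => by
    rw [Real.rpow_def_of_pos (hf x), mul_comm]
  have hap : ∀ Q : Cube n, (integH n δ f Q.toSet / hContent n δ Q.toSet) *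
      (integH n δ (fun x => f x ^ (-q)) Q.toSet / hContent n δ Q.toSet) ^ (p - 1)
      ≤ apConst n δ p f := fun Q => le_iSup (fun Q : Cube n => (integH n δ f Q.toSet / hContent n δ Q.toSet) *
      (integH n δ (fun x => f x ^ (-q)) Q.toSet / hContent n δ Q.toSet) ^ (p - 1)) Q
  have hC1 : ENNReal.ofReal ((2 * K) ^ (p - 1) * K) ≤
      ENNReal.ofReal ((2 * K) ^ (p - 1) * K + (2 * K) ^ q * K) :=
    ENNReal.ofReal_le_ofReal (le_add_of_nonneg_right (by positivity))
  have hC2 : ENNReal.ofReal ((2 * K) ^ q * K) ≤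
      ENNReal.ofReal ((2 * K) ^ (p - 1) * K + (2 * K) ^ q * K) :=
    ENNReal.ofReal_le_ofReal (le_add_of_nonneg_left (by positivity))
  have h2K : ENNReal.ofReal (2 * K) = 2 * ENNReal.ofReal K := by
    rw [ENNReal.ofReal_mul (by norm_num)]; norm_num
  constructor
  · refine iSup_le fun Q => ?_
    by_cases hQ : dContent n δ Q.toSet = 0
    · rw [integD_zero_of _ _ hQ]; simp
    have hj := jensen_avg hδ0 g hlog Q hQ (-q) (by linarith)
    simp_rw [hg2] at hj
    have hY := avgD_le_avgH hδ0 (fun x => f x ^ (-q)) Q.toSet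
    have hX := avgD_le_avgH hδ0 f Q.toSet
    have hapQ := hap Q
    set A := avgQ n δ g Q
    have e : (fun x => Real.exp (Real.log (f x) - A)) = fun x => Real.exp (-A) * f x := by
      funext x
      rw [← Real.exp_log (hf x), ← Real.exp_add, Real.exp_log (hf x)]; ring_nf
    rw [e, integD_const_mul _ _ (Real.exp_pos _), mul_div_assoc]
    have e3 : ENNReal.ofReal (Real.exp (-A)) = ENNReal.ofReal (Real.exp (-q * A)) ^ (p - 1) := by
      rw [ENNReal.ofReal_rpow_of_pos (Real.exp_pos _), ← Real.exp_mul]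
      congr 2
      linear_combination A * hqp
    rw [e3]
    set XH := integH n δ f Q.toSet / hContent n δ Q.toSet
    set YH := integH n δ (fun x => f x ^ (-q)) Q.toSet / hContent n δ Q.toSet
    calc _ ≤ (2 * (ENNReal.ofReal K * YH)) ^ (p - 1) * (ENNReal.ofReal K * XH) := by
          refine mul_le_mul' (ENNReal.rpow_le_rpow (hj.trans ?_) hp1.le) hX
          gcongr
      _ = ENNReal.ofReal ((2 * K) ^ (p - 1) * K) * (XH * YH ^ (p - 1)) := by
          rw [ENNReal.ofReal_mul (by positivity), ← ENNReal.ofReal_rpow_of_pos (by positivity), h2K,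
            ← mul_assoc 2, ENNReal.mul_rpow_of_nonneg _ _ hp1.le]
          ring
      _ ≤ _ := mul_le_mul' hC1 hapQ
  · refine iSup_le fun Q => ?_
    by_cases hQ : dContent n δ Q.toSet = 0
    · rw [integD_zero_of _ _ hQ]; simp
    have hj := jensen_avg hδ0 g hlog Q hQ 1 (by norm_num)
    simp_rw [hg1] at hj
    have hY := avgD_le_avgH hδ0 (fun x => f x ^ (-q)) Q.toSet
    have hX := avgD_le_avgH hδ0 f Q.toSet
    have hapQ := hap Q
    set A := avgQ n δ g Q
    have e : (fun x => Real.exp (-q * (Real.log (f x) - A))) =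
        fun x => Real.exp (q * A) * f x ^ (-q) := by
      funext x
      rw [← hg2, ← Real.exp_add]; simp only [hg]; ring_nf
    rw [e, integD_const_mul _ _ (Real.exp_pos _), mul_div_assoc]
    have e3 : ENNReal.ofReal (Real.exp (q * A)) = ENNReal.ofReal (Real.exp (1 * A)) ^ q := by
      rw [ENNReal.ofReal_rpow_of_pos (Real.exp_pos _), ← Real.exp_mul]
      congr 2
      ring
    rw [e3]
    set XH := integH n δ f Q.toSet / hContent n δ Q.toSet
    set YH := integH n δ (fun x => f x ^ (-q)) Q.toSet / hContent n δ Q.toSet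
    calc _ ≤ (2 * (ENNReal.ofReal K * XH)) ^ q * (ENNReal.ofReal K * YH) := by
          refine mul_le_mul' (ENNReal.rpow_le_rpow (hj.trans ?_) hq0.le) hY
          gcongr
      _ = ENNReal.ofReal ((2 * K) ^ q * K) * (XH * YH ^ (p - 1)) ^ q := by
          rw [ENNReal.ofReal_mul (by positivity), ← ENNReal.ofReal_rpow_of_pos (by positivity), h2K,
            ← mul_assoc 2, ENNReal.mul_rpow_of_nonneg _ _ hq0.le,
            ENNReal.mul_rpow_of_nonneg XH _ hq0.le, ← ENNReal.rpow_mul, mul_comm (p - 1) q, hqp,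
            ENNReal.rpow_one]
          ring
      _ ≤ _ := mul_le_mul' hC2 (ENNReal.rpow_le_rpow hapQ hq0.le)
end
end
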